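/- Let A = KQ/I be a special biserial algebra over an algebraically closed field K, b a band for A, λ ∈ K^×, and t ≥ 1. Then for every x ∈ D_supp(M(b,λ,t)) there exist a cyclic rotation b' = β_1⋯β_n of b and an integer 0 ≤ m < n, giving the infinite family of strings {b'^r w : r ∈ N} with w = β_1⋯β_m, such that for every ε > 0 there exists r_ε ∈ N with B(x,ε) ∩ D_supp(M(b'^s w)) ≠ ∅ for every s ≥ r_ε, where B(x,ε) denotes the open ball of radius ε around x in R^{supp M(b,λ,t)}. -/

import Mathlib

/-! The approximation is exact: with `b'` a suitable rotation of `b` and `w` of length `n - 1`, the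
point `x` itself lies in every `D_supp(M(b'^s w))`.

Semistability of the band module gives `∑_{j ∈ S} x(v_j) ≤ 0` for each set `S` of positions on the
cycle closed under the arrows (`bandRep_closed_sum_le`), with equality for the whole cycle. Applied
to arcs, this says that the prefix sum of `x` at an inverse letter never exceeds the one at a direct
letter (`band_sums_separated`). Hence there is a letter whose prefix sum `C` separates the two
kinds (`exists_cut`); rotate `b` so that this letter comes last. Since the prefix sums are
`n`-periodic, the prefix sums of `x` along `b'^s β_1 ⋯ β_{n-1}` are those along the band minus `C`:
they are `≥ 0` at direct letters and `≤ 0` at inverse ones, and the total is `0` because the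
string visits each position of the band exactly `s + 1` times. By Abel summation
(`closed_sum_le`), sums over closed sets of positions of the string are `≤ 0`.

A general subrepresentation of a string module is reduced to a closed set of positions by taking
leading terms (`stringRep_semistable`). This needs an order on positions that the arrows preserve,
and a reduced word always has one (`exists_position_order`). -/

attribute [local instance] Classical.propDecidable

/-- A finite quiver: finite sets of vertices and arrows with source and target maps. -/
structure FinQuiver where
  V : Type
  A : Type
  [fintypeV : Fintype V]
  [decEqV : DecidableEq V]
  [fintypeA : Fintype A]
  [decEqA : DecidableEq A]
  s : A → V
  t : A → V

attribute [instance] FinQuiver.fintypeV FinQuiver.decEqV FinQuiver.fintypeA FinQuiver.decEqA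

/-- A finite-dimensional representation of a finite quiver over a field `K`. -/
structure QRep (K : Type) [Field K] (Q : FinQuiver) where
  M : Q.V → Type
  [acg : ∀ i, AddCommGroup (M i)]
  [mod : ∀ i, Module K (M i)]
  [fd : ∀ i, FiniteDimensional K (M i)]
  φ : ∀ a : Q.A, M (Q.s a) →ₗ[K] M (Q.t a)

attribute [instance] QRep.acg QRep.mod QRep.fd

/-- A subrepresentation: a subspace at every vertex, compatible with the arrow maps. -/
structure QSubRep {K : Type} [Field K] {Q : FinQuiver} (R : QRep K Q) where
  L : ∀ i, Submodule K (R.M i)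
  compat : ∀ a : Q.A, ∀ x ∈ L (Q.s a), R.φ a x ∈ L (Q.t a)

def QSubRep.le {K : Type} [Field K] {Q : FinQuiver} {R : QRep K Q} (N N' : QSubRep R) : Prop :=
  ∀ i, N.L i ≤ N'.L i

/-- The dimension vector of a representation. -/
noncomputable def QRep.dimVec {K : Type} [Field K] {Q : FinQuiver} (R : QRep K Q) (i : Q.V) : ℕ :=
  Module.finrank K (R.M i)

/-- Standard inner product of a real vector with a dimension vector. -/
def stabInner {Q : FinQuiver} (v : Q.V → ℝ) (d : Q.V → ℕ) : ℝ :=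
  ∑ i, v i * (d i : ℝ)

/-- `v`-semistability of a representation. -/
def IsSemistable {K : Type} [Field K] {Q : FinQuiver} (R : QRep K Q) (v : Q.V → ℝ) : Prop :=
  stabInner v R.dimVec = 0 ∧
    ∀ N : QSubRep R, stabInner v (fun i => Module.finrank K (N.L i)) ≤ 0

/-- The stability space of a representation. -/
def stabSpace {K : Type} [Field K] {Q : FinQuiver} (R : QRep K Q) : Set (Q.V → ℝ) :=
  {v | IsSemistable R v}

/-- `v`-stability of a representation. -/
def IsStable {K : Type} [Field K] {Q : FinQuiver} (R : QRep K Q) (v : Q.V → ℝ) : Prop :=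
  stabInner v R.dimVec = 0 ∧
    ∀ N : QSubRep R, (∃ i, N.L i ≠ ⊥) → (∃ i, N.L i ≠ ⊤) →
      stabInner v (fun i => Module.finrank K (N.L i)) < 0

/-- The thin sincere representation with identity maps: `K` at every vertex. -/
noncomputable def thinRep (K : Type) [Field K] (Q : FinQuiver) : QRep K Q where
  M _ := K
  φ _ := LinearMap.id

/-- The set of all finite non-negative real linear combinations of elements of `X`. -/
def coneSpan {E : Type} [AddCommMonoid E] [Module ℝ E] (X : Set E) : Set E :=
  {x | ∃ (n : ℕ) (c : Fin n → ℝ) (f : Fin n → E),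
    (∀ j, 0 ≤ c j) ∧ (∀ j, f j ∈ X) ∧ x = ∑ j, c j • f j}

/-- The standard basis vector of `ℝ^{Q₀}` at a vertex. -/
noncomputable def eVec (Q : FinQuiver) (i : Q.V) : Q.V → ℝ := Pi.single i 1

/-- A subrepresentation viewed as a representation in its own right. -/
noncomputable def QSubRep.toRep {K : Type} [Field K] {Q : FinQuiver} {R : QRep K Q}
    (N : QSubRep R) : QRep K Q where
  M i := ↥(N.L i)
  φ a := (R.φ a).restrict (fun x hx => N.compat a x hx)

/-- The quotient of a representation by a subrepresentation. -/
noncomputable def QRep.quotBy {K : Type} [Field K] {Q : FinQuiver} (R : QRep K Q)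
    (N : QSubRep R) : QRep K Q where
  M i := R.M i ⧸ N.L i
  φ a := Submodule.mapQ _ _ (R.φ a) (fun x hx => N.compat a x hx)

/-- The quotient `N'/N` of nested subrepresentations, as a representation. -/
noncomputable def quotRep {K : Type} [Field K] {Q : FinQuiver} (R : QRep K Q)
    (N N' : QSubRep R) (h : QSubRep.le N N') : QRep K Q where
  M i := ↥(N'.L i) ⧸ Submodule.comap (N'.L i).subtype (N.L i)
  φ a := Submodule.mapQ _ _ ((R.φ a).restrict (fun x hx => N'.compat a x hx))
    (by
      intro x hx
      simp only [Submodule.mem_comap, Submodule.subtype_apply,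
        LinearMap.restrict_apply] at hx ⊢
      exact N.compat a _ hx)

/-- A representation is nonzero if some vertex space is nonzero. -/
def QRep.Nonzero {K : Type} [Field K] {Q : FinQuiver} (R : QRep K Q) : Prop :=
  ∃ i, Module.finrank K (R.M i) ≠ 0

/-- Indecomposability: nonzero and admitting no internal direct sum decomposition into two
nonzero subrepresentations. -/
def Indecomposable {K : Type} [Field K] {Q : FinQuiver} (R : QRep K Q) : Prop :=
  R.Nonzero ∧
    ¬∃ U W : QSubRep R, (∃ i, U.L i ≠ ⊥) ∧ (∃ i, W.L i ≠ ⊥) ∧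
      (∀ i, U.L i ⊓ W.L i = ⊥) ∧ (∀ i, U.L i ⊔ W.L i = ⊤)

/-- Isomorphism of representations. -/
def RepIso {K : Type} [Field K] {Q : FinQuiver} (R R' : QRep K Q) : Prop :=
  ∃ f : ∀ i, R.M i ≃ₗ[K] R'.M i,
    ∀ (a : Q.A) (x : R.M (Q.s a)), f (Q.t a) (R.φ a x) = R'.φ a (f (Q.s a) x)

/-- The support of a representation. -/
def QRep.supp {K : Type} [Field K] {Q : FinQuiver} (R : QRep K Q) : Set Q.V :=
  {i | Module.finrank K (R.M i) ≠ 0}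

/-- The stability space restricted to the coordinate subspace of the support. -/
def Dsupp {K : Type} [Field K] {Q : FinQuiver} (R : QRep K Q) : Set (Q.V → ℝ) :=
  stabSpace R ∩ {v | ∀ i, i ∉ R.supp → v i = 0}

/-- Standard inner product on `ℝ^V`. -/
def rInner {V : Type} [Fintype V] (a v : V → ℝ) : ℝ := ∑ i, a i * v i

/-- A face of a polyhedral cone. -/
def IsFace {V : Type} [Fintype V] (C F : Set (V → ℝ)) : Prop :=
  ∃ a : V → ℝ, (∀ v ∈ C, rInner a v ≤ 0) ∧ F = C ∩ {v | rInner a v = 0}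

/-- The dimension of the linear span of a subset of `ℝ^V`. -/
noncomputable def coneDim {V : Type} [Fintype V] (F : Set (V → ℝ)) : ℕ :=
  Module.finrank ℝ ↥(Submodule.span ℝ F)

/-- A facet: a face of codimension one. -/
def IsFacet {V : Type} [Fintype V] (C F : Set (V → ℝ)) : Prop :=
  IsFace C F ∧ coneDim F + 1 = coneDim C

/-- Composability of a list of arrows (a directed path). -/
def PathComposable {Q : FinQuiver} : List Q.A → Prop
  | [] => True
  | [_] => True
  | a :: b :: l => Q.t a = Q.s b ∧ PathComposable (b :: l)

/-- Letters: direct arrows (`inl`) and formal inverses of arrows (`inr`). -/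
abbrev Letter (Q : FinQuiver) := Q.A ⊕ Q.A

/-- Source of a letter. -/
def lsrc {Q : FinQuiver} : Letter Q → Q.V
  | Sum.inl a => Q.s a
  | Sum.inr a => Q.t a

/-- Target of a letter. -/
def ltgt {Q : FinQuiver} : Letter Q → Q.V
  | Sum.inl a => Q.t a
  | Sum.inr a => Q.s a

/-- The formal inverse of a letter. -/
def linv {Q : FinQuiver} : Letter Q → Letter Q
  | Sum.inl a => Sum.inr a
  | Sum.inr a => Sum.inl a

/-- The underlying quiver arrow of a letter. -/
def und {Q : FinQuiver} : Letter Q → Q.A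
  | Sum.inl a => a
  | Sum.inr a => a

/-- A letter is direct if it is an arrow (not a formal inverse). -/
def isDir {Q : FinQuiver} (c : Letter Q) : Prop := c.isLeft = true

/-- Composability of a word of letters. -/
def WordComposable {Q : FinQuiver} : List (Letter Q) → Prop
  | [] => True
  | [_] => True
  | c :: d :: l => ltgt c = lsrc d ∧ WordComposable (d :: l)

/-- Reducedness of a word: no letter is followed by its own inverse. -/
def WordReduced {Q : FinQuiver} : List (Letter Q) → Prop
  | [] => True
  | [_] => True
  | c :: d :: l => d ≠ linv c ∧ WordReduced (d :: l)

/-- A bound quiver: a set of (monomial) relations generating an admissible ideal. -/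
structure BoundQuiver (Q : FinQuiver) where
  rel : List Q.A → Prop
  adm_comp : ∀ u, rel u → PathComposable u ∧ 2 ≤ u.length
  adm_bound : ∃ N : ℕ, ∀ u : List Q.A, PathComposable u → N ≤ u.length →
    ∃ u', rel u' ∧ u' <:+: u

/-- The special biserial conditions on a bound quiver algebra. -/
def SpecialBiserial {Q : FinQuiver} (D : BoundQuiver Q) : Prop :=
  (∀ v : Q.V, Set.ncard {a : Q.A | Q.s a = v} ≤ 2) ∧
  (∀ v : Q.V, Set.ncard {a : Q.A | Q.t a = v} ≤ 2) ∧
  (∀ a c d : Q.A, Q.t a = Q.s c → Q.t a = Q.s d → c ≠ d → D.rel [a, c] ∨ D.rel [a, d]) ∧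
  (∀ a b c : Q.A, Q.t a = Q.s c → Q.t b = Q.s c → a ≠ b → D.rel [a, c] ∨ D.rel [b, c])

/-- A string: a nonempty composable reduced word such that no subword of it or of its
inverse lies in the ideal. -/
structure IsString {Q : FinQuiver} (D : BoundQuiver Q) (w : List (Letter Q)) : Prop where
  ne : w ≠ []
  comp : WordComposable w
  red : WordReduced w
  avoid : ∀ u : List Q.A, u.map Sum.inl <:+: w → ¬D.rel u
  avoid_inv : ∀ u : List Q.A, (u.map Sum.inr).reverse <:+: w → ¬D.rel u

/-- The `k`-fold concatenation of a word with itself. -/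
def listPow {α : Type} (u : List α) : ℕ → List α
  | 0 => []
  | n + 1 => u ++ listPow u n

/-- A band: a cyclic word all of whose powers are strings, which is not itself a proper
power of a shorter word. -/
def IsBand {Q : FinQuiver} (D : BoundQuiver Q) (b : List (Letter Q)) : Prop :=
  b ≠ [] ∧ (∀ m : ℕ, 1 ≤ m → IsString D (listPow b m)) ∧
    ∀ (u : List (Letter Q)) (k : ℕ), 2 ≤ k → b ≠ listPow u k

/-- The `j`-th vertex visited by a (nonempty) walk `w`. -/
def wVtx {Q : FinQuiver} (w : List (Letter Q)) (hw : w ≠ []) (j : ℕ) : Q.V :=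
  if j = 0 then lsrc (w.head hw) else ltgt (w.getD (j - 1) (w.head hw))

/-- The basis vector at position `j` is sent to the one at position `k` by the arrow `a`. -/
def stepsTo {Q : FinQuiver} (w : List (Letter Q)) (a : Q.A) (j k : ℕ) : Prop :=
  (k = j + 1 ∧ w[j]? = some (Sum.inl a)) ∨ (j = k + 1 ∧ w[k]? = some (Sum.inr a))

/-- The string module `M(w)` of a nonempty walk `w`, with one standard basis vector for each
vertex visit, direct letters acting forwards and inverse letters acting backwards. -/
noncomputable def stringRep (K : Type) [Field K] (Q : FinQuiver) (w : List (Letter Q))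
    (hw : w ≠ []) : QRep K Q where
  M i := ({j : Fin (w.length + 1) // wVtx w hw j = i} → K)
  φ a := Matrix.mulVecLin
    (fun (p : {j : Fin (w.length + 1) // wVtx w hw (j : ℕ) = Q.t a})
         (q : {j : Fin (w.length + 1) // wVtx w hw (j : ℕ) = Q.s a}) =>
      if stepsTo w a (q.1 : ℕ) (p.1 : ℕ) then (1 : K) else 0)

/-- The vertex `v_j` traversed by a cyclic word (indices mod the length). -/
def bVtx {Q : FinQuiver} (b : List (Letter Q)) (hb : b ≠ []) (j : ℕ) : Q.V :=
  lsrc (b.getD (j % b.length) (b.head hb))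

/-- The `j`-th letter of a cyclic word (indices mod the length). -/
def bLett {Q : FinQuiver} (b : List (Letter Q)) (hb : b ≠ []) (j : ℕ) : Letter Q :=
  b.getD (j % b.length) (b.head hb)

/-- Entry of the Jordan block of size `m` with eigenvalue `lam`. -/
noncomputable def jordEntry {K : Type} [Field K] (lam : K) {m : ℕ} (κ μ : Fin m) : K :=
  if κ = μ then lam else if (μ : ℕ) + 1 = (κ : ℕ) then 1 else 0

/-- The matrix entry of the action of the arrow `a` on a band module, from the basis vector
`z_j^μ` to the basis vector `z_k^κ`: all letters act by identity matrices except the last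
one, which acts by the Jordan block with eigenvalue `lam`. -/
noncomputable def bandEntry {Q : FinQuiver} (K : Type) [Field K] (b : List (Letter Q))
    (hb : b ≠ []) (lam : K) {m : ℕ} (a : Q.A) (k j : ℕ) (κ μ : Fin m) : K :=
  (if bLett b hb j = Sum.inl a ∧ (j + 1) % b.length = k % b.length then
    (if j % b.length + 1 = b.length then jordEntry lam κ μ else if κ = μ then 1 else 0)
   else 0)
  + (if bLett b hb k = Sum.inr a ∧ (k + 1) % b.length = j % b.length then
    (if k % b.length + 1 = b.length then jordEntry lam κ μ else if κ = μ then 1 else 0)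
   else 0)

/-- The band module `M(b, lam, m)`. -/
noncomputable def bandRep (K : Type) [Field K] (Q : FinQuiver) (b : List (Letter Q))
    (hb : b ≠ []) (lam : K) (m : ℕ) : QRep K Q where
  M i := (({j : Fin b.length // bVtx b hb j = i} × Fin m) → K)
  φ a := Matrix.mulVecLin
    (fun (p : {j : Fin b.length // bVtx b hb (j : ℕ) = Q.t a} × Fin m)
         (q : {j : Fin b.length // bVtx b hb (j : ℕ) = Q.s a} × Fin m) =>
      bandEntry K b hb lam a (p.1.1 : ℕ) (q.1.1 : ℕ) p.2 q.2)

/-- The quiver `Q_w` having the same shape as the walk `w`. -/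
@[reducible] def stringQuiver (Q : FinQuiver) (w : List (Letter Q)) : FinQuiver where
  V := Fin (w.length + 1)
  A := Fin w.length
  s j := match w.get j with
    | Sum.inl _ => j.castSucc
    | Sum.inr _ => j.succ
  t j := match w.get j with
    | Sum.inl _ => j.succ
    | Sum.inr _ => j.castSucc

/-- Cyclic successor in `Fin n`. -/
def cycSucc {n : ℕ} (j : Fin n) : Fin n := ⟨((j : ℕ) + 1) % n, Nat.mod_lt _ j.pos⟩

/-- The cyclic quiver `Q_b` having the same shape as the cyclic word `b`. -/
@[reducible] def bandQuiver (Q : FinQuiver) (b : List (Letter Q)) : FinQuiver where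
  V := Fin b.length
  A := Fin b.length
  s j := match b.get j with
    | Sum.inl _ => j
    | Sum.inr _ => cycSucc j
  t j := match b.get j with
    | Sum.inl _ => cycSucc j
    | Sum.inr _ => j

/-- A ray vector of a cone. -/
def IsRay {E : Type} [AddCommMonoid E] [Module ℝ E] (C : Set E) (u : E) : Prop :=
  u ∈ C ∧ u ≠ 0 ∧ ∀ x ∈ C, ∀ y ∈ C, u = x + y →
    (∃ c : ℝ, 0 ≤ c ∧ x = c • u) ∧ ∃ c : ℝ, 0 ≤ c ∧ y = c • u

/-- A minimal admissible sum: a nonzero non-negative combination of elements of `S` lying in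
the subspace `Rsub`, such that no nonzero non-negative combination supported on a proper
subset of its support lies in `Rsub`. -/
def IsMinAdmissibleSum {E : Type} [AddCommGroup E] [Module ℝ E] (Rsub : Set E)
    (S : Finset E) (x : E) : Prop :=
  ∃ lam : E → ℝ, (∀ s ∈ S, 0 ≤ lam s) ∧ x = ∑ s ∈ S, lam s • s ∧ x ∈ Rsub ∧ x ≠ 0 ∧
    ¬∃ mu : E → ℝ, (∀ s ∈ S, 0 ≤ mu s) ∧
      {s ∈ S | mu s ≠ 0} ⊂ {s ∈ S | lam s ≠ 0} ∧
      (∑ s ∈ S, mu s • s) ∈ Rsub ∧ (∑ s ∈ S, mu s • s) ≠ 0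

/-- The preorder induced by a walk `u` on the vertices: generated by `t(α) ≤ s(α)` over the
underlying arrows `α` of the letters of `u`. -/
def wordRel {Q : FinQuiver} (u : List (Letter Q)) : Q.V → Q.V → Prop :=
  Relation.ReflTransGen (fun x y => ∃ c ∈ u, Q.t (und c) = x ∧ Q.s (und c) = y)

/-- `v` is obtained from the cyclic word `b` by deleting one letter. -/
def DeleteOne {Q : FinQuiver} (b v : List (Letter Q)) : Prop :=
  ∃ (l₁ l₂ : List (Letter Q)) (c : Letter Q), b = l₁ ++ c :: l₂ ∧ v = l₂ ++ l₁

/-- The generating vector of the stability space of a thin band module attached to the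
`i`-th letter: `e_{v_i} - e_{v_{i+1}}` for a direct letter and its negative otherwise. -/
noncomputable def sVec {Q : FinQuiver} (b : List (Letter Q)) (hb : b ≠ []) (i : ℕ) :
    Q.V → ℝ :=
  if isDir (bLett b hb i) then
    Pi.single (bVtx b hb i) 1 - Pi.single (bVtx b hb (i + 1)) 1
  else Pi.single (bVtx b hb (i + 1)) 1 - Pi.single (bVtx b hb i) 1

/-- The set `S = {s_1, …, s_n}` of generating vectors. -/
def Sset {Q : FinQuiver} (b : List (Letter Q)) (hb : b ≠ []) : Set (Q.V → ℝ) :=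
  {u | ∃ i < b.length, u = sVec b hb i}

/-- The `g`-vector of the thin band module: the sum of the `s_i` over direct letters. -/
noncomputable def gVec {Q : FinQuiver} (b : List (Letter Q)) (hb : b ≠ []) : Q.V → ℝ :=
  ∑ i ∈ Finset.range b.length, if isDir (bLett b hb i) then sVec b hb i else 0

/-- The coefficient `ε_i` (for the mathematical index `i`, with letters `α_{i-1}`, `α_i`
at 0-based positions `i-2`, `i-1`). -/
noncomputable def epsCoef {Q : FinQuiver} (b : List (Letter Q)) (hb : b ≠ []) (i : ℕ) : ℝ :=
  if ¬isDir (bLett b hb (i - 2)) ∧ isDir (bLett b hb (i - 1)) then 1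
  else if isDir (bLett b hb (i - 2)) ∧ ¬isDir (bLett b hb (i - 1)) then -1
  else 0

/-- The vector `g_w` for `w = α_1 ⋯ α_m` (the `g`-vector of `M(w)`). -/
noncomputable def gwVec {Q : FinQuiver} (b : List (Letter Q)) (hb : b ≠ []) (m : ℕ) :
    Q.V → ℝ :=
  (if isDir (bLett b hb 0) then Pi.single (bVtx b hb 0) (1 : ℝ) else 0)
  + (if 1 ≤ m ∧ ¬isDir (bLett b hb (m - 1)) then Pi.single (bVtx b hb m) (1 : ℝ) else 0)
  + (if 1 ≤ m ∧ isDir (bLett b hb m) then -Pi.single (bVtx b hb (m + 1)) (1 : ℝ) else 0)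
  + (if isDir (bLett b hb (b.length - 1)) then -Pi.single (bVtx b hb (b.length - 1)) (1 : ℝ)
     else 0)
  + ∑ i ∈ Finset.Icc 2 m, epsCoef b hb i • (Pi.single (bVtx b hb (i - 1)) (1 : ℝ) : Q.V → ℝ)

/-- The vector `g_w'` for `w = α_1 ⋯ α_m` (equal to `-g^{M(w)ᵒᵖ}`). -/
noncomputable def gwVec' {Q : FinQuiver} (b : List (Letter Q)) (hb : b ≠ []) (m : ℕ) :
    Q.V → ℝ :=
  (if ¬isDir (bLett b hb 0) then -Pi.single (bVtx b hb 0) (1 : ℝ) else 0)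
  + (if 1 ≤ m ∧ isDir (bLett b hb (m - 1)) then -Pi.single (bVtx b hb m) (1 : ℝ) else 0)
  + (if 1 ≤ m ∧ ¬isDir (bLett b hb m) then Pi.single (bVtx b hb (m + 1)) (1 : ℝ) else 0)
  + (if ¬isDir (bLett b hb (b.length - 1)) then Pi.single (bVtx b hb (b.length - 1)) (1 : ℝ)
     else 0)
  + ∑ i ∈ Finset.Icc 2 m, epsCoef b hb i • (Pi.single (bVtx b hb (i - 1)) (1 : ℝ) : Q.V → ℝ)

/-! ### Ordering the positions of a reduced word -/

lemma exists_between_avoiding (lo hi F : Finset ℚ) (h : ∀ x ∈ lo, ∀ y ∈ hi, x < y) :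
    ∃ m : ℚ, (∀ x ∈ lo, x < m) ∧ (∀ y ∈ hi, m < y) ∧ m ∉ F := by
  obtain ⟨m, h1, h2⟩ := Order.exists_between_finsets lo hi h
  obtain ⟨m', h1', h2'⟩ := Order.exists_between_finsets
    (lo ∪ F.filter (fun x => x ≤ m)) (hi ∪ F.filter (fun x => m < x)) (by
      intro x hx y hy
      simp only [Finset.mem_union, Finset.mem_filter] at hx hy
      rcases hx with hx | hx <;> rcases hy with hy | hy
      · exact h x hx y hy
      · exact (h1 x hx).trans hy.2
      · exact hx.2.trans_lt (h2 y hy)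
      · exact hx.2.trans_lt hy.2)
  refine ⟨m', fun x hx => h1' x (Finset.mem_union_left _ hx),
    fun y hy => h2' y (Finset.mem_union_left _ hy), fun hm => ?_⟩
  rcases le_or_gt m' m with hle | hlt
  · exact lt_irrefl _ (h1' m' (Finset.mem_union_right _ (Finset.mem_filter.2 ⟨hm, hle⟩)))
  · exact lt_irrefl _ (h2' m' (Finset.mem_union_right _ (Finset.mem_filter.2 ⟨hm, hlt⟩)))

/-- Position `j` is joined to position `k` by the letter `c`, read forwards or backwards, within
the first `N` letters of the infinite word `f`. -/
def LStep {Q : FinQuiver} (f : ℕ → Letter Q) (N : ℕ) (c : Letter Q) (j k : ℕ) : Prop :=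
  (k = j + 1 ∧ j < N ∧ f j = c) ∨ (j = k + 1 ∧ k < N ∧ f k = linv c)

lemma linv_linv {Q : FinQuiver} (c : Letter Q) : linv (linv c) = c := by
  cases c <;> rfl

lemma linv_ne {Q : FinQuiver} (c : Letter Q) : linv c ≠ c := by
  cases c <;> simp [linv]

lemma LStep.symm {Q : FinQuiver} {f : ℕ → Letter Q} {N : ℕ} {c : Letter Q} {j k : ℕ}
    (h : LStep f N c j k) : LStep f N (linv c) k j := by
  rcases h with ⟨h1, h2, h3⟩ | ⟨h1, h2, h3⟩
  · exact Or.inr ⟨h1, h2, by rw [linv_linv, h3]⟩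
  · exact Or.inl ⟨h1, h2, h3⟩

lemma LStep.le {Q : FinQuiver} {f : ℕ → Letter Q} {N : ℕ} {c : Letter Q} {j k : ℕ}
    (h : LStep f N c j k) : j ≤ N ∧ k ≤ N := by
  rcases h with ⟨h1, h2, h3⟩ | ⟨h1, h2, h3⟩ <;> omega

lemma LStep.succ_cases {Q : FinQuiver} {f : ℕ → Letter Q} {N : ℕ} {c : Letter Q} {j k : ℕ}
    (h : LStep f (N + 1) c j k) :
    LStep f N c j k ∨ (j = N ∧ k = N + 1 ∧ c = f N) ∨ (j = N + 1 ∧ k = N ∧ c = linv (f N)) := by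
  rcases h with ⟨h1, h2, h3⟩ | ⟨h1, h2, h3⟩
  · rcases Nat.lt_succ_iff_lt_or_eq.1 h2 with h | h
    · exact Or.inl (Or.inl ⟨h1, h, h3⟩)
    · subst h; exact Or.inr (Or.inl ⟨rfl, h1, h3.symm⟩)
  · rcases Nat.lt_succ_iff_lt_or_eq.1 h2 with h | h
    · exact Or.inl (Or.inr ⟨h1, h, h3⟩)
    · subst h; exact Or.inr (Or.inr ⟨h1, rfl, by rw [h3, linv_linv]⟩)

/-- A total order on the positions of a reduced word for which every arrow acts strictly
monotonically. Positions are placed one at a time: by reducedness the new letter is not yet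
defined at the last position, so the next one only has to land in a gap between finitely many
rationals. -/
lemma exists_position_order {Q : FinQuiver} (f : ℕ → Letter Q)
    (hf : ∀ j, f (j + 1) ≠ linv (f j)) (N : ℕ) :
    ∃ p : ℕ → ℚ, (∀ j k, j ≤ N → k ≤ N → p j = p k → j = k) ∧
      ∀ c j j' k k', LStep f N c j j' → LStep f N c k k' → p j < p k → p j' < p k' := by
  induction N with
  | zero =>
    refine ⟨fun _ => 0, fun j k hj hk _ => by omega, fun c j j' k k' h => ?_⟩
    rcases h with ⟨h1, h2, h3⟩ | ⟨h1, h2, h3⟩ <;> omega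
  | succ N ih =>
    obtain ⟨p, hinj, hmono⟩ := ih
    -- Reducedness: before the extension, position `N` has no edge labelled by the new letter.
    have hN : ∀ j', ¬ LStep f N (f N) N j' := by
      rintro j' (⟨h1, h2, h3⟩ | ⟨h1, h2, h3⟩)
      · omega
      · apply hf j'
        rw [← h1, h3, linv_linv]
    obtain ⟨q, hq1, hq2, hq3⟩ := exists_between_avoiding
      (((Finset.range (N + 1)).filter
        (fun j' => ∃ j, LStep f N (f N) j j' ∧ p j < p N)).image p)
      (((Finset.range (N + 1)).filter
        (fun j' => ∃ j, LStep f N (f N) j j' ∧ p N < p j)).image p)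
      ((Finset.range (N + 1)).image p) (by
        intro x hx y hy
        simp only [Finset.mem_image, Finset.mem_filter] at hx hy
        obtain ⟨j', ⟨_, j, hj, hjN⟩, rfl⟩ := hx
        obtain ⟨k', ⟨_, k, hk, hkN⟩, rfl⟩ := hy
        exact hmono _ _ _ _ _ hj hk (hjN.trans hkN))
    have hlo : ∀ j j', LStep f N (f N) j j' → p j < p N → p j' < q := fun j j' h hlt =>
      hq1 _ (Finset.mem_image_of_mem _ (Finset.mem_filter.2
        ⟨Finset.mem_range.2 (by have := h.le; omega), j, h, hlt⟩))
    have hhi : ∀ j j', LStep f N (f N) j j' → p N < p j → q < p j' := fun j j' h hlt =>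
      hq2 _ (Finset.mem_image_of_mem _ (Finset.mem_filter.2
        ⟨Finset.mem_range.2 (by have := h.le; omega), j, h, hlt⟩))
    have hne : ∀ j, j ≤ N → p j ≠ q := fun j hj h =>
      hq3 (h ▸ Finset.mem_image_of_mem _ (Finset.mem_range.2 (by omega)))
    have hpN : ∀ j j', LStep f N (f N) j j' → p j ≠ p N := fun j j' h he => by
      have := hinj j N h.le.1 le_rfl he
      subst this
      exact hN _ h
    have hold : ∀ j, j ≤ N → Function.update p (N + 1) q j = p j := fun j hj => by
      rw [Function.update_of_ne (by omega)]
    have hnew : Function.update p (N + 1) q (N + 1) = q := Function.update_self ..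
    have hsym : ∀ {j j' : ℕ}, LStep f N (linv (f N)) j j' → LStep f N (f N) j' j :=
      fun h => by simpa [linv_linv] using h.symm
    refine ⟨Function.update p (N + 1) q, ?_, ?_⟩
    · intro j k hj hk hjk
      rcases Nat.le_succ_iff.1 hj with hj | rfl <;> rcases Nat.le_succ_iff.1 hk with hk | rfl
      · rw [hold j hj, hold k hk] at hjk
        exact hinj j k hj hk hjk
      · rw [hold j hj, hnew] at hjk
        exact absurd hjk (hne j hj)
      · rw [hold k hk, hnew] at hjk
        exact absurd hjk.symm (hne k hk)
      · rfl
    · intro c j j' k k' h1 h2 hlt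
      rcases h1.succ_cases with h1 | ⟨rfl, rfl, e1⟩ | ⟨rfl, rfl, e1⟩ <;>
      rcases h2.succ_cases with h2 | ⟨rfl, rfl, e2⟩ | ⟨rfl, rfl, e2⟩
      · rw [hold _ h1.le.1, hold _ h2.le.1] at hlt
        rw [hold _ h1.le.2, hold _ h2.le.2]
        exact hmono _ _ _ _ _ h1 h2 hlt
      · subst e2
        rw [hold _ h1.le.1, hold _ le_rfl] at hlt
        rw [hold _ h1.le.2, hnew]
        exact hlo _ _ h1 hlt
      · subst e2
        rw [hold _ h1.le.1, hnew] at hlt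
        rw [hold _ h1.le.2, hold _ le_rfl]
        refine lt_of_le_of_ne (not_lt.1 fun h => ?_) (hpN _ _ (hsym h1))
        exact lt_asymm hlt (hhi _ _ (hsym h1) h)
      · subst e1
        rw [hold _ h2.le.1, hold _ le_rfl] at hlt
        rw [hold _ h2.le.2, hnew]
        exact hhi _ _ h2 hlt
      · exact absurd hlt (lt_irrefl _)
      · exact absurd (e2.symm.trans e1) (linv_ne _)
      · subst e1
        rw [hold _ h2.le.1, hnew] at hlt
        rw [hold _ h2.le.2, hold _ le_rfl]
        refine lt_of_le_of_ne (not_lt.1 fun h => ?_) (hpN _ _ (hsym h2)).symm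
        exact lt_asymm hlt (hlo _ _ (hsym h2) h)
      · exact absurd (e1.symm.trans e2) (linv_ne _)
      · exact absurd hlt (lt_irrefl _)

/-! ### Dimensions of subspaces via leading positions -/

/-- `q` is the `p`-largest position in the support of some vector of `L`. -/
def IsLead {K : Type} [Field K] {ι : Type} (p : ι → ℚ) (L : Submodule K (ι → K)) (q : ι) : Prop :=
  ∃ x ∈ L, x q ≠ 0 ∧ ∀ q', p q < p q' → x q' = 0

/-- Gaussian elimination: the dimension of a subspace of `K^ι` is its number of leading
positions. -/
lemma finrank_eq_card_lead {K : Type} [Field K] {ι : Type} [Fintype ι] (p : ι → ℚ)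
    (hp : Function.Injective p) (L : Submodule K (ι → K)) :
    Module.finrank K L = Fintype.card {q // IsLead p L q} := by
  apply le_antisymm
  · rw [← Module.finrank_fintype_fun_eq_card K]
    let R : L →ₗ[K] ({q // IsLead p L q} → K) :=
      (LinearMap.funLeft K K Subtype.val).comp L.subtype
    apply LinearMap.finrank_le_finrank_of_injective (f := R)
    rw [injective_iff_map_eq_zero]
    intro x hx
    by_contra hne
    have hsupp : (Finset.univ.filter (fun q => (x : ι → K) q ≠ 0)).Nonempty := by
      by_contra hemp
      rw [Finset.not_nonempty_iff_eq_empty, Finset.filter_eq_empty_iff] at hemp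
      exact hne (Subtype.ext (funext fun q => not_not.1 (hemp (Finset.mem_univ q))))
    obtain ⟨q, hq, hmax⟩ := Finset.exists_max_image _ p hsupp
    have hq0 := (Finset.mem_filter.1 hq).2
    have hl : IsLead p L q := ⟨x, x.2, hq0, fun q' hlt => by
      by_contra h
      exact absurd (hmax q' (Finset.mem_filter.2 ⟨Finset.mem_univ _, h⟩)) (not_le.2 hlt)⟩
    exact hq0 (congrFun hx ⟨q, hl⟩)
  · choose e heL he0 he using fun q : {q // IsLead p L q} => q.2
    have hli : LinearIndependent K (fun q => (⟨e q, heL q⟩ : L)) := by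
      rw [Fintype.linearIndependent_iff]
      intro g hg
      by_contra! hex
      obtain ⟨i, hi⟩ := hex
      obtain ⟨q, hq, hmax⟩ := Finset.exists_max_image (Finset.univ.filter (fun q => g q ≠ 0))
        (fun q => p q.1) ⟨i, by simpa using hi⟩
      have hq0 : g q ≠ 0 := (Finset.mem_filter.1 hq).2
      have hev := congrFun (congrArg Subtype.val hg) q.1
      simp only [Submodule.coe_sum, Submodule.coe_smul, Finset.sum_apply, Pi.smul_apply,
        smul_eq_mul, Submodule.coe_zero, Pi.zero_apply] at hev
      rw [Finset.sum_eq_single q] at hev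
      · exact mul_ne_zero hq0 (he0 q) hev
      · intro q' _ hne
        rcases lt_trichotomy (p q'.1) (p q.1) with h | h | h
        · rw [he q' _ h, mul_zero]
        · exact absurd (Subtype.ext (hp h)) hne
        · have : g q' = 0 := by
            by_contra h0
            exact absurd (hmax q' (by simpa using h0)) (not_le.2 h)
          rw [this, zero_mul]
      · simp
    exact hli.fintype_card_le_finrank

/-- Sorting positions by the vertex they visit turns a pairing with a dimension vector into a sum
over positions. -/
lemma sum_fiber {V ι : Type} [Fintype V] [DecidableEq V] [Fintype ι] (v : V → ℝ) (vt : ι → V)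
    (T : ι → Prop) [DecidablePred T] :
    ∑ i, v i * (Fintype.card {q : {j // vt j = i} // T q.1} : ℝ) =
      ∑ j, if T j then v (vt j) else 0 := by
  rw [← (Equiv.sigmaFiberEquiv vt).sum_comp, Fintype.sum_sigma]
  refine Finset.sum_congr rfl fun i _ => ?_
  rw [Fintype.card_subtype, Finset.card_filter, Nat.cast_sum, Finset.mul_sum]
  refine Finset.sum_congr rfl fun q _ => ?_
  obtain ⟨j, rfl⟩ := q
  by_cases h : T j <;> simp [h, Equiv.sigmaFiberEquiv]

/-! ### Semistability of string modules -/

/-- Abel summation: if `T` is closed under the arrows of the word and the prefix sums of `y` have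
the sign of the letters, then the sum over `T` up to `M` is at most its boundary term at `M`. -/
lemma closed_sum_le {Q : FinQuiver} (f : ℕ → Letter Q) (N : ℕ) (y : ℕ → ℝ) (T : ℕ → Prop)
    [DecidablePred T]
    (hT : ∀ a j k, j ≤ N → LStep f N (Sum.inl a) j k → T j → T k)
    (hdir : ∀ j < N, ∀ a, f j = Sum.inl a → 0 ≤ ∑ i ∈ Finset.range (j + 1), y i)
    (hinv : ∀ j < N, ∀ a, f j = Sum.inr a → ∑ i ∈ Finset.range (j + 1), y i ≤ 0)
    (M : ℕ) (hM : M ≤ N) :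
    (∑ j ∈ Finset.range (M + 1), if T j then y j else 0) ≤
      if T M then ∑ j ∈ Finset.range (M + 1), y j else 0 := by
  induction M with
  | zero => simp
  | succ M ih =>
    have ih := ih (by omega)
    rw [Finset.sum_range_succ, Finset.sum_range_succ (n := M + 1)]
    rcases hc : f M with a | a
    · have h1 := hdir M (by omega) a hc
      have h2 := hT a M (M + 1) (by omega) (Or.inl ⟨rfl, by omega, hc⟩)
      split_ifs at * <;> first | linarith | tauto
    · have h1 := hinv M (by omega) a hc
      have h2 := hT a (M + 1) M (by omega) (Or.inr ⟨rfl, by omega, hc⟩)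
      split_ifs at * <;> first | linarith | tauto

lemma wVtx_eq {Q : FinQuiver} (f : ℕ → Letter Q) (hcomp : ∀ j, ltgt (f j) = lsrc (f (j + 1)))
    (w : List (Letter Q)) (hw : w ≠ []) (hwf : ∀ j < w.length, w[j]? = some (f j))
    (j : ℕ) (hj : j ≤ w.length) : wVtx w hw j = lsrc (f j) := by
  have hpos : 0 < w.length := List.length_pos_of_ne_nil hw
  rcases j with _ | j
  · have := hwf 0 hpos
    rw [← List.head?_eq_getElem?, List.head?_eq_some_head hw] at this
    simp [wVtx, Option.some.inj this]
  · rw [← hcomp]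
    simp [wVtx, List.getD_eq_getElem?_getD, hwf j (by omega)]

/-- A string module is semistable as soon as the prefix sums of `v` along the string are `≥ 0` at
direct letters, `≤ 0` at inverse letters, and `0` at the end. For a subrepresentation, the set of
leading positions is closed under the arrows of the string, because each arrow respects the order
of `exists_position_order`; it also has the right dimension vector. -/
lemma stringRep_semistable (K : Type) [Field K] {Q : FinQuiver} (f : ℕ → Letter Q)
    (hf : ∀ j, f (j + 1) ≠ linv (f j)) (hcomp : ∀ j, ltgt (f j) = lsrc (f (j + 1)))
    (w : List (Letter Q)) (hw : w ≠ [])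
    (hwf : ∀ j < w.length, w[j]? = some (f j)) (v : Q.V → ℝ)
    (hdir : ∀ j < w.length, ∀ a, f j = Sum.inl a →
      0 ≤ ∑ i ∈ Finset.range (j + 1), v (wVtx w hw i))
    (hinv : ∀ j < w.length, ∀ a, f j = Sum.inr a →
      ∑ i ∈ Finset.range (j + 1), v (wVtx w hw i) ≤ 0)
    (htot : ∑ i ∈ Finset.range (w.length + 1), v (wVtx w hw i) = 0) :
    IsSemistable (stringRep K Q w hw) v := by
  have hstep : ∀ a j k, stepsTo w a j k ↔ LStep f w.length (Sum.inl a) j k := by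
    have : ∀ j (c : Letter Q), w[j]? = some c ↔ j < w.length ∧ f j = c := by
      intro j c
      constructor
      · intro h
        have hj : j < w.length := (List.getElem?_eq_some_iff.1 h).1
        rw [hwf j hj] at h
        exact ⟨hj, Option.some.inj h⟩
      · rintro ⟨hj, rfl⟩
        exact hwf j hj
    intro a j k
    simp only [stepsTo, LStep, this, linv]
  constructor
  · have := sum_fiber v (fun j : Fin (w.length + 1) => wVtx w hw j) (fun _ => True)
    simp only [if_true] at this
    rw [← htot, Finset.sum_range, ← this]
    refine Finset.sum_congr rfl fun i _ => ?_
    congr 2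
    rw [Fintype.card_subtype_true]
    exact Module.finrank_fintype_fun_eq_card K
  · intro N
    obtain ⟨p, hinj, hmono⟩ := exists_position_order f hf w.length
    let pp : ∀ i, {j : Fin (w.length + 1) // wVtx w hw j = i} → ℚ := fun i q => p q.1
    have hpp : ∀ i, Function.Injective (pp i) := fun i q q' h =>
      Subtype.ext (Fin.ext (hinj _ _ (by omega) (by omega) h))
    let L : ∀ i, Submodule K ({j : Fin (w.length + 1) // wVtx w hw j = i} → K) := N.L
    obtain ⟨T, hT⟩ : ∃ T : ℕ → Prop, ∀ j, T j ↔
        ∃ i, ∃ q : {j : Fin (w.length + 1) // wVtx w hw j = i},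
          (q.1 : ℕ) = j ∧ IsLead (pp i) (L i) q := ⟨_, fun _ => Iff.rfl⟩
    have hTq : ∀ i (q : {j : Fin (w.length + 1) // wVtx w hw j = i}),
        IsLead (pp i) (L i) q ↔ T q.1 := by
      intro i q
      rw [hT]
      constructor
      · exact fun h => ⟨i, q, rfl, h⟩
      · rintro ⟨i', ⟨q', rfl⟩, h1, h2⟩
        obtain ⟨q, rfl⟩ := q
        have : q' = q := Fin.ext h1
        subst this
        exact h2
    have hsum : stabInner v (fun i => Module.finrank K (N.L i)) =
        ∑ j ∈ Finset.range (w.length + 1), if T j then v (wVtx w hw j) else 0 := by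
      rw [Finset.sum_range,
        ← sum_fiber v (fun j : Fin (w.length + 1) => wVtx w hw j) (fun j => T j)]
      refine Finset.sum_congr rfl fun i _ => ?_
      congr 2
      refine (finrank_eq_card_lead (pp i) (hpp i) (L i)).trans ?_
      exact Fintype.card_congr (Equiv.subtypeEquivRight (hTq i))
    rw [hsum]
    refine (closed_sum_le f w.length (fun j => v (wVtx w hw j)) T ?_ hdir hinv w.length
      le_rfl).trans ?_
    · intro a j k _ hjk
      rw [hT, hT]
      rintro ⟨i, q, hq, x, hxL, hx0, hx⟩
      have hvt : wVtx w hw j = Q.s a ∧ wVtx w hw k = Q.t a := by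
        rcases hjk with ⟨rfl, h2, h3⟩ | ⟨rfl, h2, h3⟩
        · rw [wVtx_eq f hcomp w hw hwf _ (by omega), wVtx_eq f hcomp w hw hwf _ (by omega),
            ← hcomp, h3]
          exact ⟨rfl, rfl⟩
        · rw [wVtx_eq f hcomp w hw hwf _ (by omega), wVtx_eq f hcomp w hw hwf _ (by omega),
            ← hcomp, h3]
          exact ⟨rfl, rfl⟩
      have hi : i = Q.s a := by rw [← hvt.1, ← hq]; exact q.2.symm
      subst hi
      have hφ : ∀ (k' : {j : Fin (w.length + 1) // wVtx w hw j = Q.t a}),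
          (stringRep K Q w hw).φ a x k' =
            ∑ q' : {j : Fin (w.length + 1) // wVtx w hw j = Q.s a},
              (if stepsTo w a q'.1 k'.1 then 1 else 0) * x q' := fun k' => rfl
      refine ⟨Q.t a, ⟨⟨k, Nat.lt_succ_of_le hjk.le.2⟩, hvt.2⟩, rfl,
        (stringRep K Q w hw).φ a x, N.compat a x hxL, ?_, ?_⟩
      · rw [hφ, Finset.sum_eq_single q]
        · rw [if_pos (by rw [hstep, hq]; exact hjk), one_mul]
          exact hx0
        · intro q' _ hne
          rw [if_neg, zero_mul]
          intro hs
          rw [hstep] at hs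
          rcases lt_trichotomy (p q'.1) (p j) with h | h | h
          · exact lt_irrefl _ (hmono _ _ _ _ _ hs hjk h)
          · exact hne (Subtype.ext (Fin.ext ((hinj _ _ (by omega) hjk.le.1 h).trans hq.symm)))
          · exact lt_irrefl _ (hmono _ _ _ _ _ hjk hs h)
        · simp
      · intro k' hk'
        rw [hφ]
        refine Finset.sum_eq_zero fun q' _ => ?_
        split_ifs with hs
        · rw [hstep] at hs
          rw [hx q' (by
            change p q.1 < p q'.1
            rw [hq]
            exact hmono _ _ _ _ _ hjk.symm hs.symm hk'), mul_zero]
        · rw [zero_mul]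
    · rw [htot]; simp

/-! ### Inequalities from semistability of the band module -/

/-- A set of positions on the cycle that is closed under the arrows spans, tensored with `K^t`, a
subrepresentation of the band module. -/
lemma bandRep_closed_sum_le (K : Type) [Field K] {Q : FinQuiver} (b : List (Letter Q))
    (hb : b ≠ []) (lam : K) (t : ℕ) (ht : 1 ≤ t) (v : Q.V → ℝ)
    (hss : IsSemistable (bandRep K Q b hb lam t) v) (S : ℕ → Prop)
    [DecidablePred S]
    (hS : ∀ a j k, j < b.length → k < b.length →
      (bLett b hb j = Sum.inl a ∧ (j + 1) % b.length = k) ∨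
      (bLett b hb k = Sum.inr a ∧ (k + 1) % b.length = j) → S j → S k) :
    (∑ j ∈ Finset.range b.length, if S j then v (bVtx b hb j) else 0) ≤ 0 := by
  let L : ∀ i, Submodule K ({j : Fin b.length // bVtx b hb j = i} × Fin t → K) := fun i =>
    { carrier := {x | ∀ q, ¬ S q.1.1 → x q = 0}
      add_mem' := fun hx hy q hq => by simp [hx q hq, hy q hq]
      zero_mem' := fun q _ => rfl
      smul_mem' := fun c x hx q hq => by simp [hx q hq] }
  let N : QSubRep (bandRep K Q b hb lam t) :=
    { L := L
      compat := by
        intro a x hx p hp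
        change ∑ q : {j : Fin b.length // bVtx b hb j = Q.s a} × Fin t,
          bandEntry K b hb lam a p.1.1 q.1.1 p.2 q.2 * x q = 0
        refine Finset.sum_eq_zero fun q _ => ?_
        by_cases hq : S q.1.1
        · have hmp := Nat.mod_eq_of_lt p.1.1.2
          have hmq := Nat.mod_eq_of_lt q.1.1.2
          have h1 := hS a q.1.1 p.1.1 q.1.1.2 p.1.1.2
          unfold bandEntry
          rw [if_neg, if_neg, add_zero, zero_mul]
          · rw [hmq]; exact fun h => hp (h1 (Or.inr h) hq)
          · rw [hmp]; exact fun h => hp (h1 (Or.inl h) hq)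
        · rw [hx q hq, mul_zero] }
  have hfr : ∀ i, Module.finrank K (L i) =
      Fintype.card {q : {j : Fin b.length // bVtx b hb j = i} // S q.1} * t := by
    intro i
    rw [finrank_eq_card_lead (fun q => ((Fintype.equivFin _ q : ℕ) : ℚ)) (fun q q' h => by
      simpa [Fin.val_inj] using h) (L i)]
    refine Eq.trans ?_ ((Fintype.card_prod
      {q : {j : Fin b.length // bVtx b hb j = i} // S q.1} (Fin t)).trans (by rw [Fintype.card_fin]))
    refine Fintype.card_congr ((Equiv.subtypeEquivRight (q := fun q => S q.1.1) fun q => ?_).trans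
      ⟨fun q => (⟨q.1.1, q.2⟩, q.1.2), fun q => ⟨(q.1.1, q.2), q.1.2⟩,
        fun _ => rfl, fun _ => rfl⟩)
    constructor
    · rintro ⟨x, hx, hx0, -⟩
      by_contra h
      exact hx0 (hx q h)
    · intro h
      refine ⟨Pi.single q 1, fun q' hq' => ?_, by simp, fun q' hq' => ?_⟩
      · exact Pi.single_eq_of_ne (by rintro rfl; exact hq' h) _
      · exact Pi.single_eq_of_ne (by rintro rfl; exact lt_irrefl _ hq') _
  have hle := hss.2 N
  have hsum : stabInner v (fun i => Module.finrank K (N.L i)) =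
      (∑ j ∈ Finset.range b.length, if S j then v (bVtx b hb j) else 0) * t := by
    rw [Finset.sum_range, ← sum_fiber v (fun j : Fin b.length => bVtx b hb j) (fun j => S j),
      Finset.sum_mul]
    refine Finset.sum_congr rfl fun i _ => ?_
    rw [mul_assoc]
    congr 1
    exact_mod_cast hfr i
  rw [hsum] at hle
  have : (0 : ℝ) < t := by exact_mod_cast ht
  exact nonpos_of_mul_nonpos_left hle this

lemma bandRep_total (K : Type) [Field K] {Q : FinQuiver} (b : List (Letter Q))
    (hb : b ≠ []) (lam : K) (t : ℕ) (ht : 1 ≤ t) (v : Q.V → ℝ)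
    (hss : IsSemistable (bandRep K Q b hb lam t) v) :
    ∑ j ∈ Finset.range b.length, v (bVtx b hb j) = 0 := by
  have h := hss.1
  have hsum : stabInner v (bandRep K Q b hb lam t).dimVec =
      (∑ j ∈ Finset.range b.length, v (bVtx b hb j)) * t := by
    have := sum_fiber v (fun j : Fin b.length => bVtx b hb j) (fun _ => True)
    simp only [if_true] at this
    rw [Finset.sum_range, ← this, Finset.sum_mul]
    refine Finset.sum_congr rfl fun i _ => ?_
    rw [mul_assoc]
    congr 1
    rw [Fintype.card_subtype_true]
    have : Module.finrank K ({j : Fin b.length // bVtx b hb j = i} × Fin t → K) =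
        Fintype.card {j : Fin b.length // bVtx b hb j = i} * t := by
      rw [Module.finrank_fintype_fun_eq_card, Fintype.card_prod, Fintype.card_fin]
    exact_mod_cast this
  rw [hsum] at h
  have : (t : ℝ) ≠ 0 := by exact_mod_cast (by omega : t ≠ 0)
  exact (mul_eq_zero.1 h).resolve_right this

/-- The cyclic arc from after the direct letter `k` up to the inverse letter `l` is entered by the
arrows at both of its ends, hence is closed; its sum is the difference of the two prefix sums,
also when it wraps around since the total vanishes. -/
lemma band_sums_separated (K : Type) [Field K] {Q : FinQuiver} (b : List (Letter Q))
    (hb : b ≠ []) (lam : K) (t : ℕ) (ht : 1 ≤ t) (v : Q.V → ℝ)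
    (hss : IsSemistable (bandRep K Q b hb lam t) v) (k l : ℕ) (hk : k < b.length)
    (hl : l < b.length) (a c : Q.A) (hka : bLett b hb k = Sum.inl a)
    (hlc : bLett b hb l = Sum.inr c) :
    ∑ j ∈ Finset.range (l + 1), v (bVtx b hb j) ≤
      ∑ j ∈ Finset.range (k + 1), v (bVtx b hb j) := by
  have hmod : ∀ j < b.length, (j + 1) % b.length = j + 1 ∧ j + 1 < b.length ∨
      (j + 1) % b.length = 0 ∧ j + 1 = b.length := by
    intro j hj
    rcases Nat.lt_or_eq_of_le (Nat.succ_le_of_lt hj) with h | h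
    · exact Or.inl ⟨Nat.mod_eq_of_lt h, h⟩
    · exact Or.inr ⟨by rw [← h]; exact Nat.mod_self _, h⟩
  have hnek : ∀ d, bLett b hb k ≠ Sum.inr d := by simp [hka]
  have hnel : ∀ d, bLett b hb l ≠ Sum.inl d := by simp [hlc]
  have hkl : k ≠ l := by rintro rfl; exact hnek c hlc
  rcases Nat.lt_or_gt_of_ne hkl with hlt | hlt
  · have h := bandRep_closed_sum_le K b hb lam t ht v hss (fun j => k < j ∧ j ≤ l) (by
      rintro d i j hi hj (⟨h1, h2⟩ | ⟨h1, h2⟩) ⟨h3, h4⟩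
      · have : i ≠ l := by rintro rfl; exact hnel _ h1
        have := hmod i hi
        omega
      · have : j ≠ k := by rintro rfl; exact hnek _ h1
        have := hmod j hj
        omega)
    rw [← Finset.sum_filter] at h
    have he : (Finset.range b.length).filter (fun j => k < j ∧ j ≤ l) =
        Finset.Ico (k + 1) (l + 1) := by
      ext j; simp only [Finset.mem_filter, Finset.mem_range, Finset.mem_Ico]; omega
    rw [he, Finset.sum_Ico_eq_sub _ (by omega)] at h
    linarith
  · have h := bandRep_closed_sum_le K b hb lam t ht v hss (fun j => ¬ (l < j ∧ j ≤ k)) (by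
      rintro d i j hi hj (⟨h1, h2⟩ | ⟨h1, h2⟩) h3 h4
      · have : i ≠ l := by rintro rfl; exact hnel _ h1
        have := hmod i hi
        omega
      · have : j ≠ k := by rintro rfl; exact hnek _ h1
        have := hmod j hj
        omega)
    have hadd := Finset.sum_filter_add_sum_filter_not (Finset.range b.length)
      (fun j => l < j ∧ j ≤ k) (fun j => v (bVtx b hb j))
    rw [bandRep_total K b hb lam t ht v hss] at hadd
    rw [← Finset.sum_filter] at h
    have he : (Finset.range b.length).filter (fun j => l < j ∧ j ≤ k) =
        Finset.Ico (l + 1) (k + 1) := by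
      ext j; simp only [Finset.mem_filter, Finset.mem_range, Finset.mem_Ico]; omega
    rw [he, Finset.sum_Ico_eq_sub _ (by omega)] at hadd
    linarith

/-- Some prefix sum lies below those at all direct letters and above those at all inverse
letters: the least one at a direct letter, or the greatest one if there is no direct letter. -/
lemma exists_cut (K : Type) [Field K] {Q : FinQuiver} (b : List (Letter Q))
    (hb : b ≠ []) (lam : K) (t : ℕ) (ht : 1 ≤ t) (v : Q.V → ℝ)
    (hss : IsSemistable (bandRep K Q b hb lam t) v) :
    ∃ k₀ < b.length,
      (∀ k < b.length, ∀ a, bLett b hb k = Sum.inl a →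
        ∑ j ∈ Finset.range (k₀ + 1), v (bVtx b hb j) ≤
          ∑ j ∈ Finset.range (k + 1), v (bVtx b hb j)) ∧
      (∀ l < b.length, ∀ a, bLett b hb l = Sum.inr a →
        ∑ j ∈ Finset.range (l + 1), v (bVtx b hb j) ≤
          ∑ j ∈ Finset.range (k₀ + 1), v (bVtx b hb j)) := by
  by_cases hd : ∃ k < b.length, ∃ a, bLett b hb k = Sum.inl a
  · obtain ⟨k, hk, hka⟩ := hd
    obtain ⟨k₀, hk₀, hmin⟩ := Finset.exists_min_image
      ((Finset.range b.length).filter (fun k => ∃ a, bLett b hb k = Sum.inl a))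
      (fun k => ∑ j ∈ Finset.range (k + 1), v (bVtx b hb j))
      ⟨k, Finset.mem_filter.2 ⟨Finset.mem_range.2 hk, hka⟩⟩
    obtain ⟨hk₀, a, ha⟩ := Finset.mem_filter.1 hk₀
    rw [Finset.mem_range] at hk₀
    refine ⟨k₀, hk₀, fun k hk c hc => hmin k
      (Finset.mem_filter.2 ⟨Finset.mem_range.2 hk, c, hc⟩), fun l hl c hc => ?_⟩
    exact band_sums_separated K b hb lam t ht v hss k₀ l hk₀ hl a c ha hc
  · obtain ⟨k₀, hk₀, hmax⟩ := Finset.exists_max_image (Finset.range b.length)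
      (fun k => ∑ j ∈ Finset.range (k + 1), v (bVtx b hb j))
      ⟨0, Finset.mem_range.2 (List.length_pos_of_ne_nil hb)⟩
    exact ⟨k₀, Finset.mem_range.1 hk₀, fun k hk a ha => absurd ⟨k, hk, a, ha⟩ hd,
      fun l hl _ _ => hmax l (Finset.mem_range.2 hl)⟩

/-! ### Words and periodicity -/

lemma wordComposable_getElem {Q : FinQuiver} {w : List (Letter Q)} (h : WordComposable w) (j : ℕ)
    (hj : j + 1 < w.length) : ltgt w[j] = lsrc w[j + 1] := by
  induction w generalizing j with
  | nil => simp at hj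
  | cons c w ih =>
    rcases w with _ | ⟨d, w⟩
    · simp at hj
    · rcases j with _ | j
      · exact h.1
      · exact ih h.2 j (by simpa using hj)

lemma wordReduced_getElem {Q : FinQuiver} {w : List (Letter Q)} (h : WordReduced w) (j : ℕ)
    (hj : j + 1 < w.length) : w[j + 1] ≠ linv w[j] := by
  induction w generalizing j with
  | nil => simp at hj
  | cons c w ih =>
    rcases w with _ | ⟨d, w⟩
    · simp at hj
    · rcases j with _ | j
      · exact h.1
      · exact ih h.2 j (by simpa using hj)

lemma band_letters {Q : FinQuiver} {D : BoundQuiver Q} {b : List (Letter Q)} (hb : IsBand D b)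
    (j : ℕ) : ltgt (bLett b hb.1 j) = lsrc (bLett b hb.1 (j + 1)) ∧
      bLett b hb.1 (j + 1) ≠ linv (bLett b hb.1 j) := by
  have hpos : 0 < b.length := List.length_pos_of_ne_nil hb.1
  have hs := hb.2.1 2 (by norm_num)
  have h2 : listPow b 2 = b ++ b := by simp [listPow]
  rw [h2] at hs
  have hget : ∀ i (hi : i < (b ++ b).length), (b ++ b)[i] = bLett b hb.1 i := by
    intro i hi
    rw [List.length_append] at hi
    unfold bLett
    rw [List.getElem_append, List.getD_eq_getElem _ _ (Nat.mod_lt _ hpos)]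
    split_ifs with h
    · congr 1; exact (Nat.mod_eq_of_lt h).symm
    · congr 1
      rw [Nat.mod_eq_sub_mod (by omega), Nat.mod_eq_of_lt (by omega)]
  have hper : ∀ i, bLett b hb.1 (i % b.length) = bLett b hb.1 i ∧
      bLett b hb.1 (i % b.length + 1) = bLett b hb.1 (i + 1) := by
    intro i
    unfold bLett
    simp
  have hlt : j % b.length + 1 < (b ++ b).length := by
    have := Nat.mod_lt j hpos
    rw [List.length_append]; omega
  have h3 := wordComposable_getElem hs.comp _ hlt
  have h4 := wordReduced_getElem hs.red _ hlt
  rw [hget, hget, (hper j).1, (hper j).2] at h3 h4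
  exact ⟨h3, h4⟩

lemma listPow_length {α : Type} (u : List α) (s : ℕ) : (listPow u s).length = s * u.length := by
  induction s with
  | zero => simp [listPow]
  | succ s ih => rw [listPow, List.length_append, ih]; ring

lemma listPow_getElem? {α : Type} (u : List α) (m s j : ℕ) (hm : m ≤ u.length)
    (hj : j < s * u.length + m) :
    (listPow u s ++ u.take m)[j]? = u[j % u.length]? := by
  induction s generalizing j with
  | zero =>
    have : j < m := by omega
    simp [listPow, this, Nat.mod_eq_of_lt (this.trans_le hm)]
  | succ s ih =>
    rw [listPow, List.append_assoc]
    by_cases h : j < u.length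
    · rw [List.getElem?_append_left h, Nat.mod_eq_of_lt h]
    · rw [List.getElem?_append_right (by omega), ih _ (by rw [Nat.succ_mul] at hj; omega),
        ← Nat.mod_eq_sub_mod (by omega)]

lemma bLett_add_length {Q : FinQuiver} (b : List (Letter Q)) (hb : b ≠ []) (j : ℕ) :
    bLett b hb (j + b.length) = bLett b hb j := by
  simp [bLett]

lemma bVtx_eq {Q : FinQuiver} (b : List (Letter Q)) (hb : b ≠ []) (j : ℕ) :
    bVtx b hb j = lsrc (bLett b hb j) := rfl

/-- Prefix sums of a periodic sequence with zero sum over a period are periodic. -/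
lemma prefix_mod (g : ℕ → ℝ) (n : ℕ) (hg : ∀ j, g (j + n) = g j)
    (h0 : ∑ j ∈ Finset.range n, g j = 0) (j : ℕ) :
    ∑ i ∈ Finset.range (j + 1), g i = ∑ i ∈ Finset.range (j % n + 1), g i := by
  have hper : ∀ j, ∑ i ∈ Finset.range (j + n), g i = ∑ i ∈ Finset.range j, g i := by
    intro j
    rw [add_comm j n, Finset.sum_range_add, h0, zero_add]
    exact Finset.sum_congr rfl fun i _ => by rw [add_comm, hg]
  have hmul : ∀ m j, ∑ i ∈ Finset.range (j + n * m), g i = ∑ i ∈ Finset.range j, g i := by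
    intro m
    induction m with
    | zero => simp
    | succ m ih =>
      intro j
      rw [Nat.mul_succ, ← add_assoc, hper, ih]
  conv_lhs => rw [← Nat.mod_add_div j n, add_right_comm]
  exact hmul _ _

/-! ### Comparison of the band with its strings -/

/-- For an arbitrary band `b` over a special biserial algebra, `λ ∈ K^×`
and `t ≥ 1`, every point `x` of the supported stability space of the band module
`M(b, λ, t)` is approximated by the supported stability spaces of a family of string
modules `M(b'^s w)`, for some rotation `b'` of `b` and initial segment `w` of `b'`: for
every `ε > 0` there is `r_ε` such that for all `s ≥ r_ε` the open ball `B(x, ε)` meets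
`D_supp(M(b'^s w))`. -/
theorem band_stability_space_approximated_by_strings
    (K : Type) [Field K] [IsAlgClosed K] (Q : FinQuiver) (D : BoundQuiver Q)
    (hsb : SpecialBiserial D) (b : List (Letter Q)) (hb : IsBand D b)
    (lam : K) (hlam : lam ≠ 0) (t : ℕ) (ht : 1 ≤ t)
    (x : Q.V → ℝ) (hx : x ∈ Dsupp (bandRep K Q b hb.1 lam t)) :
    ∃ (b' : List (Letter Q)) (m : ℕ), List.IsRotated b b' ∧ m < b'.length ∧
      ∀ ε : ℝ, 0 < ε → ∃ rε : ℕ, ∀ s : ℕ, rε ≤ s →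
        ∀ hne : listPow b' s ++ b'.take m ≠ [],
          ∃ y ∈ Dsupp (stringRep K Q (listPow b' s ++ b'.take m) hne), dist y x < ε := by
  have hpos : 0 < b.length := List.length_pos_of_ne_nil hb.1
  obtain ⟨k₀, hk₀, hmin, hmax⟩ := exists_cut K b hb.1 lam t ht x hx.1
  have hlen : (b.rotate (k₀ + 1)).length = b.length := List.length_rotate ..
  refine ⟨b.rotate (k₀ + 1), b.length - 1, ⟨k₀ + 1, rfl⟩, by omega, fun ε hε => ⟨0, fun s _ hne =>
    ⟨x, ?_, by simpa using hε⟩⟩⟩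
  set w := listPow (b.rotate (k₀ + 1)) s ++ (b.rotate (k₀ + 1)).take (b.length - 1) with hw
  have hwlen : w.length + 1 = (s + 1) * b.length := by
    rw [hw, List.length_append, listPow_length, List.length_take, hlen, Nat.succ_mul,
      Nat.min_eq_left (by omega)]
    omega
  let f : ℕ → Letter Q := fun j => bLett b hb.1 (k₀ + 1 + j)
  have hf : ∀ j, f (j + 1) ≠ linv (f j) := fun j => (band_letters hb (k₀ + 1 + j)).2
  have hcomp : ∀ j, ltgt (f j) = lsrc (f (j + 1)) := fun j => (band_letters hb (k₀ + 1 + j)).1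
  have hwf : ∀ j < w.length, w[j]? = some (f j) := by
    intro j hj
    rw [hw, listPow_getElem? _ _ _ _ (by omega) (by
      rw [hlen]; rw [Nat.succ_mul] at hwlen; omega), hlen,
      List.getElem?_rotate (Nat.mod_lt _ hpos)]
    have hlt := Nat.mod_lt (k₀ + 1 + j) hpos
    have he : (j % b.length + (k₀ + 1)) % b.length = (k₀ + 1 + j) % b.length := by
      rw [Nat.mod_add_mod, add_comm]
    rw [he, List.getElem?_eq_getElem hlt]
    simp only [f, bLett]
    rw [List.getD_eq_getElem _ _ hlt]
  have hvtx : ∀ j ≤ w.length, wVtx w hne j = bVtx b hb.1 (k₀ + 1 + j) := fun j hj =>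
    wVtx_eq f hcomp w hne hwf j hj
  -- Prefix sums along the string are differences of prefix sums along the band.
  have hsum : ∀ j ≤ w.length, ∑ i ∈ Finset.range (j + 1), x (wVtx w hne i) =
      ∑ i ∈ Finset.range ((k₀ + 1 + j) % b.length + 1), x (bVtx b hb.1 i) -
        ∑ i ∈ Finset.range (k₀ + 1), x (bVtx b hb.1 i) := by
    intro j hj
    rw [← prefix_mod (fun i => x (bVtx b hb.1 i)) b.length
      (fun i => by simp only [bVtx_eq, bLett_add_length])
      (bandRep_total K b hb.1 lam t ht x hx.1), add_assoc,
      Finset.sum_range_add _ (k₀ + 1) (j + 1), add_sub_cancel_left]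
    refine Finset.sum_congr rfl fun i hi => ?_
    rw [hvtx i (by have := Finset.mem_range.1 hi; omega)]
  have hfmod : ∀ j, bLett b hb.1 ((k₀ + 1 + j) % b.length) = f j := by
    intro j
    simp [f, bLett]
  refine ⟨stringRep_semistable K f hf hcomp w hne hwf x ?_ ?_ ?_, ?_⟩
  · intro j hj a ha
    rw [hsum j hj.le, sub_nonneg]
    exact hmin _ (Nat.mod_lt _ hpos) a ((hfmod j).trans ha)
  · intro j hj a ha
    rw [hsum j hj.le, sub_nonpos]
    exact hmax _ (Nat.mod_lt _ hpos) a ((hfmod j).trans ha)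
  · have he : (k₀ + 1 + w.length) % b.length = k₀ := by
      rw [add_assoc, add_comm 1, hwlen, Nat.add_mul_mod_self_right, Nat.mod_eq_of_lt hk₀]
    rw [hsum _ le_rfl, he, sub_self]
  · intro i hi
    apply hx.2
    intro hib
    apply hi
    change Module.finrank K ({j : Fin (w.length + 1) // wVtx w hne j = i} → K) ≠ 0
    change Module.finrank K ({j : Fin b.length // bVtx b hb.1 j = i} × Fin t → K) ≠ 0 at hib
    rw [Module.finrank_fintype_fun_eq_card] at hib ⊢
    obtain ⟨⟨⟨j, hj⟩, _⟩⟩ := Fintype.card_pos_iff.1 (Nat.pos_of_ne_zero hib)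
    -- The string visits a full period, so it meets position `j` of the band.
    have hjlt : (j + (b.length - 1 - k₀)) % b.length ≤ w.length := by
      have h1 := Nat.mod_lt (j + (b.length - 1 - k₀)) hpos
      rw [Nat.succ_mul] at hwlen
      omega
    refine (Fintype.card_pos_iff.2 ⟨⟨⟨_, Nat.lt_succ_of_le hjlt⟩, ?_⟩⟩).ne'
    rw [hvtx _ hjlt, ← hj]
    have he : (k₀ + 1 + (j + (b.length - 1 - k₀)) % b.length) % b.length = j % b.length := by
      rw [Nat.add_mod_mod, show k₀ + 1 + (j + (b.length - 1 - k₀)) = j + b.length by omega,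
        Nat.add_mod_right]
    simp only [bVtx, he]
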